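/- Let n > 0, λ < 1 with λ ≠ 1 - n², μ ∈ ℝ. In flat spacetime with u = ∂_t and constant n, suppose A_μ solves the evolution system: (Box_m - μ² n^{-2}(1-λ)) A₀ = 0, (Box_γ - μ²) A_i = (1-λ-n²) ∂_i φ for i = 1,2,3, and Box_m φ = μ² n^{-2}(1-λ) φ, and suppose the identities φ = ∂₀ A₀ = (1-λ)^{-1} ∂_i A^i hold at t = 0 together with their first time derivatives. Then ∂₀ A₀ = (1-λ)^{-1} ∂_i A^i holds for all time, i.e. the constraint ∂_α(m^{αβ} A_β) = 0 propagates. -/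

import Mathlib

noncomputable section

/-- Partial derivative `∂_i f`. -/
def pd (i : Fin 4) (f : (Fin 4 → ℝ) → ℝ) : (Fin 4 → ℝ) → ℝ :=
  fun x => fderiv ℝ f x (Pi.single i 1)

/-- `Box_γ = -n²∂₀² + Δ`. -/
def BoxGam (n : ℝ) (f : (Fin 4 → ℝ) → ℝ) : (Fin 4 → ℝ) → ℝ :=
  fun x => -n ^ 2 * pd 0 (pd 0 f) x + ∑ i : Fin 3, pd i.succ (pd i.succ f) x

/-- `Box_m = (λ-1)∂₀² + Δ`. -/
def BoxM (lam : ℝ) (f : (Fin 4 → ℝ) → ℝ) : (Fin 4 → ℝ) → ℝ :=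
  fun x => (lam - 1) * pd 0 (pd 0 f) x + ∑ i : Fin 3, pd i.succ (pd i.succ f) x

/-!
Both `φ - ∂₀A₀` and `φ - (1-λ)⁻¹ ∂ᵢAⁱ` solve Klein–Gordon equations with vanishing Cauchy data. For
the first one this is the evolution equation of `A₀` differentiated in time. For the second one,
the divergence of the equations for `Aᵢ` reads `(Box_γ - μ²) ∂ᵢAⁱ = (1-λ-n²) Δφ`, and eliminating
`∂₀²φ` by the equation of `φ` shows that this source equals `(1-λ) (Box_γ - μ²) φ`.

Uniqueness is an energy estimate in a backward characteristic cone. The energy current, multiplied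
by a smooth weight which is positive inside the cone and zero outside, has nonpositive divergence:
the current is conserved, and the Cauchy–Schwarz inequality bounds its flux through the level sets
of the cone function. The divergence theorem on a box whose lateral faces avoid the cone then
forces the energy to vanish on every later time slice.
-/

open MeasureTheory Set

/-- The partial derivative `pd` of a function of arbitrarily many real coordinates. -/
def partialDeriv {ι : Type*} [Fintype ι] [DecidableEq ι] (i : ι) (f : (ι → ℝ) → ℝ) :
    (ι → ℝ) → ℝ :=
  fun x => fderiv ℝ f x (Pi.single i 1)

local notation "∂[" i "]" => partialDeriv i

section PartialDeriv

variable {ι : Type*} [Fintype ι] [DecidableEq ι] {f g : (ι → ℝ) → ℝ} {x : ι → ℝ}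

lemma contDiff_partialDeriv {k l : WithTop ℕ∞} (hf : ContDiff ℝ l f) (hkl : k + 1 ≤ l) (i : ι) :
    ContDiff ℝ k (∂[i] f) :=
  (hf.fderiv_right hkl).clm_apply contDiff_const

lemma differentiable_partialDeriv (hf : ContDiff ℝ 2 f) (i : ι) : Differentiable ℝ (∂[i] f) :=
  (contDiff_partialDeriv (k := 1) hf (by norm_num) i).differentiable one_ne_zero

lemma partialDeriv_comm (hf : ContDiff ℝ 2 f) (i j : ι) : ∂[i] (∂[j] f) = ∂[j] (∂[i] f) := by
  funext x
  have hf' : DifferentiableAt ℝ (fderiv ℝ f) x :=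
    (hf.fderiv_right (m := 1) (by norm_num)).differentiable one_ne_zero x
  have iterated (k l : ι) :
      ∂[k] (∂[l] f) x = fderiv ℝ (fderiv ℝ f) x (Pi.single k 1) (Pi.single l 1) := by
    unfold partialDeriv
    simp [fderiv_clm_apply hf' (differentiableAt_const _)]
  rw [iterated, iterated]
  exact hf.contDiffAt.isSymmSndFDerivAt (by simp) _ _

lemma partialDeriv_add (hf : Differentiable ℝ f) (hg : Differentiable ℝ g) (i : ι) :
    ∂[i] (f + g) = ∂[i] f + ∂[i] g := by
  funext x
  simp [partialDeriv, fderiv_add (hf x) (hg x)]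

lemma partialDeriv_sub (hf : Differentiable ℝ f) (hg : Differentiable ℝ g) (i : ι) :
    ∂[i] (f - g) = ∂[i] f - ∂[i] g := by
  funext x
  simp [partialDeriv, fderiv_sub (hf x) (hg x)]

lemma partialDeriv_const_smul (c : ℝ) (f : (ι → ℝ) → ℝ) (i : ι) :
    ∂[i] (c • f) = c • ∂[i] f := by
  funext x
  simp [partialDeriv, fderiv_const_smul_field]

lemma partialDeriv_sum {κ : Type*} [Fintype κ] {F : κ → (ι → ℝ) → ℝ}
    (hF : ∀ k, Differentiable ℝ (F k)) (i : ι) : ∂[i] (∑ k, F k) = ∑ k, ∂[i] (F k) := by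
  funext x
  simp [partialDeriv, fderiv_sum fun k _ => hF k x]

lemma partialDeriv_mul (hf : Differentiable ℝ f) (hg : Differentiable ℝ g) (i : ι) :
    ∂[i] (f * g) = f * ∂[i] g + g * ∂[i] f := by
  funext x
  simp [partialDeriv, fderiv_mul (hf x) (hg x)]

lemma partialDeriv_sq (hf : Differentiable ℝ f) (i : ι) :
    ∂[i] (f ^ 2) = (2 : ℝ) • (f * ∂[i] f) := by
  rw [sq, partialDeriv_mul hf hf, two_smul]

lemma partialDeriv_comp {h : ℝ → ℝ} (hh : Differentiable ℝ h) (hf : Differentiable ℝ f) (i : ι) :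
    ∂[i] (h ∘ f) = (deriv h ∘ f) * ∂[i] f := by
  funext x
  simp [partialDeriv, ((hh (f x)).hasDerivAt.comp_hasFDerivAt x (hf x).hasFDerivAt).fderiv]

lemma partialDeriv_comp_neg (f : (ι → ℝ) → ℝ) (i : ι) :
    ∂[i] (fun x => f (-x)) = fun x => -∂[i] f (-x) := by
  funext x
  simpa [partialDeriv] using
    DFunLike.congr_fun (fderiv_comp_smul (f := f) (x := x) (-1 : ℝ)) (Pi.single i 1)

lemma partialDeriv_eq_zero_of_forall_apply_eq_zero {i j : ι} (hij : i ≠ j)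
    (hf : DifferentiableAt ℝ f x) (h : ∀ y, y j = 0 → f y = 0) (hx : x j = 0) :
    ∂[i] f x = 0 := by
  have vanish_on_line : (fun s : ℝ => f (x + s • Pi.single i 1)) = fun _ => 0 := by
    funext s
    exact h _ (by simp [hx, hij.symm])
  rw [partialDeriv, ← hf.lineDeriv_eq_fderiv, lineDeriv, vanish_on_line, deriv_const]

lemma fderiv_eq_zero_of_partialDeriv_eq_zero (h : ∀ i, ∂[i] f x = 0) : fderiv ℝ f x = 0 :=
  ContinuousLinearMap.coe_injective <| LinearMap.pi_ext' fun i => LinearMap.ext_ring <| h i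

lemma sum_partialDeriv_mul {w : (ι → ℝ) → ℝ} {V : ι → (ι → ℝ) → ℝ} (hw : Differentiable ℝ w)
    (hV : ∀ i, Differentiable ℝ (V i)) (x : ι → ℝ) :
    ∑ i, ∂[i] (w * V i) x = w x * ∑ i, ∂[i] (V i) x + ∑ i, ∂[i] w x * V i x := by
  simp [partialDeriv_mul hw (hV _), Finset.sum_add_distrib, Finset.mul_sum, mul_comm]

end PartialDeriv

lemma eq_zero_of_mem_interior_of_setIntegral_nonpos {X : Type*} [TopologicalSpace X] [T2Space X]
    [MeasurableSpace X] [OpensMeasurableSpace X] {ν : Measure X} [ν.IsOpenPosMeasure]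
    [IsFiniteMeasureOnCompacts ν] {K : Set X} (hK : IsCompact K) {f : X → ℝ} (hf : ContinuousOn f K)
    (hf0 : ∀ x ∈ K, 0 ≤ f x) (hint : ∫ x in K, f x ∂ν ≤ 0) {x : X} (hx : x ∈ interior K) :
    f x = 0 := by
  have integral_eq_zero : ∫ x in K, f x ∂ν = 0 :=
    hint.antisymm (setIntegral_nonneg hK.measurableSet hf0)
  have ae_zero : f =ᵐ[ν.restrict K] 0 :=
    (setIntegral_eq_zero_iff_of_nonneg_ae (ae_restrict_of_forall_mem hK.measurableSet hf0)
      (hf.integrableOn_compact hK)).1 integral_eq_zero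
  exact Measure.eqOn_open_of_ae_eq (ae_restrict_of_ae_restrict_of_subset interior_subset ae_zero)
    isOpen_interior (hf.mono interior_subset) continuousOn_const hx

section Flux

variable {d : ℕ} {V : Fin (d + 1) → (Fin (d + 1) → ℝ) → ℝ} {t ρ : ℝ}

lemma setIntegral_top_face_nonpos_of_divergence_nonpos (hV : ∀ i, ContDiff ℝ 1 (V i))
    (ht : 0 ≤ t) (hρ : 0 ≤ ρ) (hdiv : ∀ x, x 0 ≤ t → ∑ i, ∂[i] (V i) x ≤ 0)
    (hbottom : ∀ x, x 0 = 0 → V 0 x = 0)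
    (hside : ∀ x (j : Fin d), 0 ≤ x 0 → x 0 ≤ t → |x j.succ| = ρ → V j.succ x = 0) :
    ∫ y in Icc (fun _ : Fin d => -ρ) (fun _ => ρ), V 0 (Fin.cons t y) ≤ 0 := by
  let lo : Fin (d + 1) → ℝ := Fin.cons 0 fun _ => -ρ
  let hi : Fin (d + 1) → ℝ := Fin.cons t fun _ => ρ
  have hle : lo ≤ hi := Fin.cons_le_cons.2 ⟨ht, fun _ => by simp; linarith⟩
  have side_face (j : Fin d) (s : ℝ) (hs : |s| = ρ) :
      ∫ y in Icc (lo ∘ j.succ.succAbove) (hi ∘ j.succ.succAbove),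
        V j.succ (j.succ.insertNth s y) = 0 := by
    refine setIntegral_eq_zero_of_forall_eq_zero fun y hy => ?_
    obtain ⟨k, rfl⟩ : ∃ k, d = k + 1 := Nat.exists_eq_add_one.2 j.pos
    have time_eq : (j.succ.insertNth s y : Fin (k + 2) → ℝ) 0 = y 0 := by
      simpa using Fin.insertNth_apply_succAbove (α := fun _ => ℝ) j.succ s y 0
    have time_mem := And.intro (hy.1 0) (hy.2 0)
    simp only [Function.comp, Fin.succ_succAbove_zero, lo, hi, Fin.cons_zero] at time_mem
    exact hside _ j (time_eq ▸ time_mem.1) (time_eq ▸ time_mem.2) (by simpa using hs)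
  have divergence_continuous : Continuous fun x => ∑ i, ∂[i] (V i) x :=
    continuous_finsetSum _ fun i _ =>
      (contDiff_partialDeriv (k := 0) (hV i) (by simp) i).continuous
  have divergence_theorem := integral_divergence_of_hasFDerivAt_off_countable' lo hi hle V
    (fun i => fderiv ℝ (V i)) ∅ countable_empty (fun i => (hV i).continuous.continuousOn)
    (fun x _ i => ((hV i).differentiable one_ne_zero x).hasFDerivAt)
    (divergence_continuous.continuousOn.integrableOn_compact isCompact_Icc)
  have bottom_face : ∫ y in Icc (lo ∘ Fin.succAbove 0) (hi ∘ Fin.succAbove 0),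
      V 0 (Fin.insertNth 0 (lo 0) y) = 0 :=
    setIntegral_eq_zero_of_forall_eq_zero fun y _ => hbottom _ (by simp [lo])
  rw [Fin.sum_univ_succ, bottom_face, sub_zero, Finset.sum_eq_zero fun j _ => by
    rw [side_face j _ (by simp [hi, abs_of_nonneg hρ]),
      side_face j _ (by simp [lo, abs_of_nonneg hρ]), sub_zero], add_zero] at divergence_theorem
  calc ∫ y in Icc (fun _ : Fin d => -ρ) (fun _ => ρ), V 0 (Fin.cons t y)
      = ∫ x in Icc lo hi, ∑ i, fderiv ℝ (V i) x (Pi.single i 1) := by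
        rw [divergence_theorem]
        simp [lo, hi, Function.comp_def]
    _ ≤ 0 := setIntegral_nonpos measurableSet_Icc fun x hx => hdiv x (hx.2 0)

lemma top_face_eq_zero_of_divergence_nonpos (hV : ∀ i, ContDiff ℝ 1 (V i)) (ht : 0 ≤ t)
    (hdiv : ∀ x, x 0 ≤ t → ∑ i, ∂[i] (V i) x ≤ 0) (hbottom : ∀ x, x 0 = 0 → V 0 x = 0)
    (hside : ∀ x (j : Fin d), 0 ≤ x 0 → x 0 ≤ t → |x j.succ| = ρ → V j.succ x = 0)
    (hnonneg : ∀ x, 0 ≤ V 0 x) {x : Fin (d + 1) → ℝ} (hx : x 0 = t) (hxρ : ‖x‖ < ρ) :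
    V 0 x = 0 := by
  have hρ : 0 ≤ ρ := (norm_nonneg x).trans hxρ.le
  have coord_mem (j : Fin d) : -ρ < Fin.tail x j ∧ Fin.tail x j < ρ :=
    abs_lt.1 ((norm_le_pi_norm x j.succ).trans_lt hxρ)
  have hcont : Continuous fun y : Fin d → ℝ => V 0 (Fin.cons t y) :=
    (hV 0).continuous.comp (continuous_const.finCons continuous_id)
  have := eq_zero_of_mem_interior_of_setIntegral_nonpos isCompact_Icc hcont.continuousOn
    (fun y _ => hnonneg _)
    (setIntegral_top_face_nonpos_of_divergence_nonpos hV ht hρ hdiv hbottom hside)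
    (mem_interior_iff_mem_nhds.2
      (pi_Icc_mem_nhds (fun j => (coord_mem j).1) fun j => (coord_mem j).2))
  rwa [← hx, Fin.cons_self_tail] at this

end Flux

/-- The spatial Laplacian `Δ = ∑ᵢ ∂ᵢ²` on the spacetime `ℝ^{1+d}`, whose time coordinate has
index `0`. -/
def spatialLaplacian {d : ℕ} (f : (Fin (d + 1) → ℝ) → ℝ) : (Fin (d + 1) → ℝ) → ℝ :=
  ∑ i : Fin d, ∂[i.succ] (∂[i.succ] f)

/-- The wave operator `-a ∂₀² + Δ` with propagation speed `1 / √a` for `0 < a`. Both `BoxGam`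
and `BoxM` are of this form. -/
def waveOperator {d : ℕ} (a : ℝ) (f : (Fin (d + 1) → ℝ) → ℝ) : (Fin (d + 1) → ℝ) → ℝ :=
  spatialLaplacian f - a • ∂[0] (∂[0] f)

/-- The spatial divergence `∑ᵢ ∂ᵢ Aᵢ` of a family of spatial components. -/
def spatialDivergence {d : ℕ} (A : Fin d → (Fin (d + 1) → ℝ) → ℝ) : (Fin (d + 1) → ℝ) → ℝ :=
  fun x => ∑ i, ∂[i.succ] (A i) x

/-- The energy density `a (∂₀f)² + |∇f|² + m f²` of the Klein–Gordon equation
`waveOperator a f = m f`. -/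
def energyDensity {d : ℕ} (a m : ℝ) (f : (Fin (d + 1) → ℝ) → ℝ) : (Fin (d + 1) → ℝ) → ℝ :=
  a • ∂[0] f ^ 2 + ∑ i : Fin d, ∂[i.succ] f ^ 2 + m • f ^ 2

/-- The energy current of the Klein–Gordon equation: the energy density in the time direction, the
energy flux `-2 ∂₀f ∂ᵢf` in the spatial directions. -/
def energyCurrent {d : ℕ} (a m : ℝ) (f : (Fin (d + 1) → ℝ) → ℝ) :
    Fin (d + 1) → (Fin (d + 1) → ℝ) → ℝ :=
  Fin.cons (energyDensity a m f) fun i => (-2 : ℝ) • (∂[0] f * ∂[i.succ] f)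

/-- The function `(T - t)² - a |x|²`, which for `t ≤ T` is positive exactly inside the backward
characteristic cone of `waveOperator a` with apex at time `T` over the spatial origin. -/
def coneFunction {d : ℕ} (a T : ℝ) (x : Fin (d + 1) → ℝ) : ℝ :=
  (T - x 0) ^ 2 - a * ∑ i : Fin d, x i.succ ^ 2

/-- The energy current cut off to the characteristic cone by a smooth weight, which
vanishes to infinite order where `coneFunction a T = 0`. -/
def coneEnergyCurrent {d : ℕ} (a m T : ℝ) (f : (Fin (d + 1) → ℝ) → ℝ) (i : Fin (d + 1)) :
    (Fin (d + 1) → ℝ) → ℝ :=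
  (expNegInvGlue ∘ coneFunction a T) * energyCurrent a m f i

section Energy

variable {d : ℕ} {a m T : ℝ} {f : (Fin (d + 1) → ℝ) → ℝ} {x : Fin (d + 1) → ℝ}

lemma energyDensity_apply : energyDensity a m f x =
    a * ∂[0] f x ^ 2 + ∑ i : Fin d, ∂[i.succ] f x ^ 2 + m * f x ^ 2 := by
  simp [energyDensity]

lemma energyDensity_nonneg (ha : 0 ≤ a) (hm : 0 ≤ m) (f : (Fin (d + 1) → ℝ) → ℝ)
    (x : Fin (d + 1) → ℝ) : 0 ≤ energyDensity a m f x := by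
  rw [energyDensity_apply]
  positivity

lemma fderiv_eq_zero_of_energyDensity_eq_zero (ha : 0 < a) (hm : 0 ≤ m)
    (h : energyDensity a m f x = 0) : fderiv ℝ f x = 0 := by
  have time_nonneg : 0 ≤ a * ∂[0] f x ^ 2 := by positivity
  have space_nonneg : 0 ≤ ∑ i : Fin d, ∂[i.succ] f x ^ 2 := by positivity
  have mass_nonneg : 0 ≤ m * f x ^ 2 := by positivity
  rw [energyDensity_apply] at h
  have time_eq_zero : a * ∂[0] f x ^ 2 = 0 := by linarith
  have space_eq_zero : ∑ i : Fin d, ∂[i.succ] f x ^ 2 = 0 := by linarith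
  refine fderiv_eq_zero_of_partialDeriv_eq_zero (Fin.cases ?_ fun i => ?_)
  · simpa [ha.ne'] using time_eq_zero
  · rw [Finset.sum_eq_zero_iff_of_nonneg fun _ _ => sq_nonneg _] at space_eq_zero
    exact pow_eq_zero_iff two_ne_zero |>.1 (space_eq_zero i (Finset.mem_univ i))

lemma energyDensity_eq_zero_of_initial_data (hf : Differentiable ℝ f)
    (h0 : ∀ x, x 0 = 0 → f x = 0) (h1 : ∀ x, x 0 = 0 → ∂[0] f x = 0) (hx : x 0 = 0) :
    energyDensity a m f x = 0 := by
  have tangential (i : Fin d) : ∂[i.succ] f x = 0 :=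
    partialDeriv_eq_zero_of_forall_apply_eq_zero i.succ_ne_zero (hf x) h0 hx
  simp [energyDensity_apply, tangential, h0 x hx, h1 x hx]

lemma contDiff_energyCurrent (hf : ContDiff ℝ 2 f) (i : Fin (d + 1)) :
    ContDiff ℝ 1 (energyCurrent a m f i) := by
  have hf1 : ContDiff ℝ 1 f := hf.of_le (by norm_num)
  have hpf (i) : ContDiff ℝ 1 (∂[i] f) := contDiff_partialDeriv hf (by norm_num) i
  cases i using Fin.cases with
  | zero =>
    have hsum : ContDiff ℝ 1 (∑ i : Fin d, ∂[i.succ] f ^ 2) := by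
      rw [Finset.sum_fn]
      exact ContDiff.sum fun i _ => (hpf i.succ).pow 2
    exact ((((hpf 0).pow 2).const_smul a).add hsum).add ((hf1.pow 2).const_smul m)
  | succ i => exact ((hpf 0).mul (hpf i.succ)).const_smul (-2 : ℝ)

lemma partialDeriv_zero_energyDensity (hf : ContDiff ℝ 2 f) : ∂[0] (energyDensity a m f) x =
    2 * (a * (∂[0] f x * ∂[0] (∂[0] f) x) + ∑ i : Fin d, ∂[i.succ] f x * ∂[i.succ] (∂[0] f) x
      + m * (f x * ∂[0] f x)) := by
  have df : Differentiable ℝ f := hf.differentiable two_ne_zero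
  have dpf (i) : Differentiable ℝ (∂[i] f) := differentiable_partialDeriv hf i
  have dsum : Differentiable ℝ (∑ i : Fin d, ∂[i.succ] f ^ 2) :=
    Differentiable.sum fun i _ => (dpf i.succ).pow 2
  have dtime : Differentiable ℝ (a • ∂[0] f ^ 2) := ((dpf 0).pow 2).const_smul a
  rw [energyDensity, partialDeriv_add (dtime.add dsum) ((df.pow 2).const_smul m),
    partialDeriv_add dtime dsum, partialDeriv_sum fun i : Fin d => (dpf i.succ).pow 2]
  simp only [partialDeriv_const_smul, partialDeriv_sq (dpf _), partialDeriv_sq df,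
    partialDeriv_comm hf 0 (Fin.succ _)]
  simp only [Pi.add_apply, Pi.smul_apply, Pi.mul_apply, Finset.sum_apply, smul_eq_mul,
    ← Finset.mul_sum]
  ring

lemma sum_partialDeriv_energyCurrent (hf : ContDiff ℝ 2 f) (x : Fin (d + 1) → ℝ) :
    ∑ i, ∂[i] (energyCurrent a m f i) x = -2 * ∂[0] f x * (waveOperator a f x - m * f x) := by
  have flux (i : Fin d) : ∂[i.succ] (energyCurrent a m f i.succ) x =
      -2 * (∂[0] f x * ∂[i.succ] (∂[i.succ] f) x + ∂[i.succ] f x * ∂[i.succ] (∂[0] f) x) := by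
    rw [energyCurrent, Fin.cons_succ, partialDeriv_const_smul,
      partialDeriv_mul (differentiable_partialDeriv hf 0) (differentiable_partialDeriv hf i.succ)]
    rfl
  rw [Fin.sum_univ_succ, Finset.sum_congr rfl fun i _ => flux i, ← Finset.mul_sum,
    Finset.sum_add_distrib, ← Finset.mul_sum, energyCurrent, Fin.cons_zero,
    partialDeriv_zero_energyDensity hf]
  simp only [waveOperator, spatialLaplacian, Pi.sub_apply, Finset.sum_apply, Pi.smul_apply,
    smul_eq_mul]
  ring

lemma contDiff_coneFunction {k : WithTop ℕ∞} : ContDiff ℝ k (coneFunction (d := d) a T) := by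
  unfold coneFunction
  fun_prop

lemma hasFDerivAt_coneFunction (a T : ℝ) (x : Fin (d + 1) → ℝ) :
    HasFDerivAt (coneFunction a T)
      ((-2 * (T - x 0)) • ContinuousLinearMap.proj (R := ℝ) (φ := fun _ => ℝ) (0 : Fin (d + 1)) -
        (2 * a) • ∑ i : Fin d, x i.succ • ContinuousLinearMap.proj (R := ℝ) i.succ) x := by
  have coord (i : Fin (d + 1)) := hasFDerivAt_apply (𝕜 := ℝ) (F' := fun _ => ℝ) i x
  refine ((((coord 0).const_sub T).pow 2).sub ((HasFDerivAt.fun_sum (u := Finset.univ)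
    fun (i : Fin d) _ => (coord i.succ).pow 2).const_mul a)).congr_fderiv ?_
  ext v
  simp [Finset.mul_sum, mul_assoc, mul_left_comm]

lemma partialDeriv_zero_coneFunction : ∂[0] (coneFunction a T) x = -2 * (T - x 0) := by
  simp [partialDeriv, (hasFDerivAt_coneFunction a T x).fderiv]

lemma partialDeriv_succ_coneFunction (i : Fin d) :
    ∂[i.succ] (coneFunction a T) x = -2 * a * x i.succ := by
  simp [partialDeriv, (hasFDerivAt_coneFunction a T x).fderiv, Pi.single_apply]

lemma two_mul_sum_mul_le_of_mem_cone {ι : Type*} [Fintype ι] {s p : ℝ} {y u : ι → ℝ} (ha : 0 ≤ a)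
    (hs : 0 ≤ s) (hcone : a * ∑ i, y i ^ 2 ≤ s ^ 2) :
    2 * a * p * ∑ i, y i * u i ≤ s * (a * p ^ 2 + ∑ i, u i ^ 2) := by
  refine le_of_abs_le (abs_le_of_sq_le_sq ?_ (by positivity))
  calc (2 * a * p * ∑ i, y i * u i) ^ 2
      = 4 * a ^ 2 * p ^ 2 * (∑ i, y i * u i) ^ 2 := by ring
    _ ≤ 4 * a ^ 2 * p ^ 2 * ((∑ i, y i ^ 2) * ∑ i, u i ^ 2) := by
        gcongr
        exact Finset.sum_mul_sq_le_sq_mul_sq _ _ _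
    _ = 4 * a * p ^ 2 * (∑ i, u i ^ 2) * (a * ∑ i, y i ^ 2) := by ring
    _ ≤ 4 * a * p ^ 2 * (∑ i, u i ^ 2) * s ^ 2 := by gcongr
    _ = s ^ 2 * (4 * (a * p ^ 2) * ∑ i, u i ^ 2) := by ring
    _ ≤ s ^ 2 * (a * p ^ 2 + ∑ i, u i ^ 2) ^ 2 := by
        gcongr
        exact four_mul_le_sq_add _ _
    _ = (s * (a * p ^ 2 + ∑ i, u i ^ 2)) ^ 2 := by ring

lemma sum_partialDeriv_coneFunction_mul_energyCurrent_nonpos (ha : 0 ≤ a) (hm : 0 ≤ m)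
    (f : (Fin (d + 1) → ℝ) → ℝ) (hx : x 0 ≤ T) (hcone : 0 ≤ coneFunction a T x) :
    ∑ i, ∂[i] (coneFunction a T) x * energyCurrent a m f i x ≤ 0 := by
  have timelike : 2 * a * ∂[0] f x * ∑ i : Fin d, x i.succ * ∂[i.succ] f x ≤
      (T - x 0) * (a * ∂[0] f x ^ 2 + ∑ i : Fin d, ∂[i.succ] f x ^ 2) :=
    two_mul_sum_mul_le_of_mem_cone ha (sub_nonneg.2 hx) (sub_nonneg.1 hcone)
  have mass_nonneg : 0 ≤ (T - x 0) * (m * f x ^ 2) :=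
    mul_nonneg (sub_nonneg.2 hx) (by positivity)
  calc ∑ i, ∂[i] (coneFunction a T) x * energyCurrent a m f i x
      = 2 * (2 * a * ∂[0] f x * ∑ i : Fin d, x i.succ * ∂[i.succ] f x)
        - 2 * ((T - x 0) * energyDensity a m f x) := by
        simp only [Fin.sum_univ_succ, partialDeriv_zero_coneFunction,
          partialDeriv_succ_coneFunction, energyCurrent, Fin.cons_zero, Fin.cons_succ,
          Pi.smul_apply, Pi.mul_apply, smul_eq_mul, Finset.mul_sum]
        rw [add_comm, sub_eq_add_neg]
        congr 1
        · exact Finset.sum_congr rfl fun i _ => by ring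
        · ring
    _ ≤ 0 := by
        rw [energyDensity_apply]
        linarith

lemma contDiff_coneEnergyCurrent (hf : ContDiff ℝ 2 f) (i : Fin (d + 1)) :
    ContDiff ℝ 1 (coneEnergyCurrent a m T f i) :=
  (expNegInvGlue.contDiff (n := 1) |>.comp contDiff_coneFunction).mul (contDiff_energyCurrent hf i)

lemma coneEnergyCurrent_eq_zero (hx : coneFunction a T x ≤ 0) (i : Fin (d + 1)) :
    coneEnergyCurrent a m T f i x = 0 := by
  simp [coneEnergyCurrent, expNegInvGlue.zero_of_nonpos hx]

lemma deriv_expNegInvGlue_of_nonpos {r : ℝ} (hr : r ≤ 0) : deriv expNegInvGlue r = 0 :=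
  IsLocalMin.deriv_eq_zero <| Filter.Eventually.of_forall fun s => by
    rw [expNegInvGlue.zero_of_nonpos hr]
    exact expNegInvGlue.nonneg s

lemma sum_partialDeriv_coneEnergyCurrent_nonpos (ha : 0 ≤ a) (hm : 0 ≤ m) (hf : ContDiff ℝ 2 f)
    (heq : waveOperator a f = m • f) (hx : x 0 ≤ T) :
    ∑ i, ∂[i] (coneEnergyCurrent a m T f i) x ≤ 0 := by
  have dglue : Differentiable ℝ expNegInvGlue :=
    (expNegInvGlue.contDiff (n := 1)).differentiable one_ne_zero
  have dcone : Differentiable ℝ (coneFunction (d := d) a T) :=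
    (contDiff_coneFunction (k := 1)).differentiable one_ne_zero
  have conservation : ∑ i, ∂[i] (energyCurrent a m f i) x = 0 := by
    simp [sum_partialDeriv_energyCurrent hf, heq]
  calc ∑ i, ∂[i] (coneEnergyCurrent a m T f i) x
      = ∑ i, ∂[i] (expNegInvGlue ∘ coneFunction a T) x * energyCurrent a m f i x := by
        unfold coneEnergyCurrent
        rw [sum_partialDeriv_mul (dglue.comp dcone)
          fun i => (contDiff_energyCurrent hf i).differentiable one_ne_zero, conservation,
          mul_zero, zero_add]
    _ = deriv expNegInvGlue (coneFunction a T x) *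
          ∑ i, ∂[i] (coneFunction a T) x * energyCurrent a m f i x := by
        simp [partialDeriv_comp dglue dcone, Finset.mul_sum, mul_assoc]
    _ ≤ 0 := by
        rcases le_total (coneFunction a T x) 0 with hcone | hcone
        · simp [deriv_expNegInvGlue_of_nonpos hcone]
        · exact mul_nonpos_of_nonneg_of_nonpos expNegInvGlue.monotone.deriv_nonneg
            (sum_partialDeriv_coneFunction_mul_energyCurrent_nonpos ha hm f hx hcone)

lemma fderiv_eq_zero_of_nonneg_time (ha : 0 < a) (hm : 0 ≤ m) (hf : ContDiff ℝ 2 f)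
    (heq : waveOperator a f = m • f) (h0 : ∀ x, x 0 = 0 → f x = 0)
    (h1 : ∀ x, x 0 = 0 → ∂[0] f x = 0) {z : Fin (d + 1) → ℝ} (hz : 0 ≤ z 0) :
    fderiv ℝ f z = 0 := by
  set Y := a * ∑ i : Fin d, z i.succ ^ 2 with hY
  have hY0 : 0 ≤ Y := by positivity
  set T := z 0 + 1 + Y with hT
  have z_in_cone : 0 < coneFunction a T z := by
    rw [coneFunction, ← hY, hT]
    nlinarith
  obtain ⟨ρ, hzρ, hTρ⟩ : ∃ ρ, ‖z‖ < ρ ∧ T ^ 2 ≤ a * ρ ^ 2 :=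
    ((Filter.eventually_gt_atTop ‖z‖).and
      (((Filter.tendsto_pow_atTop two_ne_zero).const_mul_atTop ha).eventually_ge_atTop
        (T ^ 2))).exists
  have sides_outside_cone (x : Fin (d + 1) → ℝ) (j : Fin d) (hx0 : 0 ≤ x 0) (hxz : x 0 ≤ z 0)
      (hxρ : |x j.succ| = ρ) : coneFunction a T x ≤ 0 := by
    refine sub_nonpos.2 ?_
    calc (T - x 0) ^ 2 ≤ T ^ 2 := by gcongr <;> linarith
      _ ≤ a * x j.succ ^ 2 := by rwa [← sq_abs (x j.succ), hxρ]
      _ ≤ a * ∑ i : Fin d, x i.succ ^ 2 := by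
          gcongr
          exact Finset.single_le_sum (f := fun i : Fin d => x i.succ ^ 2)
            (fun i _ => sq_nonneg _) (Finset.mem_univ j)
  have current_eq_zero : coneEnergyCurrent a m T f 0 z = 0 :=
    top_face_eq_zero_of_divergence_nonpos (contDiff_coneEnergyCurrent hf) hz
      (fun x hx => sum_partialDeriv_coneEnergyCurrent_nonpos ha.le hm hf heq (by linarith))
      (fun x hx => mul_eq_zero_of_right _
        (energyDensity_eq_zero_of_initial_data (hf.differentiable two_ne_zero) h0 h1 hx))
      (fun x j hx0 hxz hxρ => coneEnergyCurrent_eq_zero (sides_outside_cone x j hx0 hxz hxρ) _)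
      (fun x => mul_nonneg (expNegInvGlue.nonneg _) (energyDensity_nonneg ha.le hm f x)) rfl hzρ
  exact fderiv_eq_zero_of_energyDensity_eq_zero ha hm
    ((mul_eq_zero.1 current_eq_zero).resolve_left (expNegInvGlue.pos_of_pos z_in_cone).ne')

end Energy

section WaveOperator

variable {d : ℕ} {a m : ℝ} {f g : (Fin (d + 1) → ℝ) → ℝ}

lemma pd_eq_partialDeriv : pd = partialDeriv :=
  rfl

lemma boxGam_eq_waveOperator (n : ℝ) (f : (Fin 4 → ℝ) → ℝ) :
    BoxGam n f = waveOperator (n ^ 2) f := by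
  funext x
  simp only [BoxGam, waveOperator, spatialLaplacian, Pi.sub_apply, Pi.smul_apply, Finset.sum_apply,
    smul_eq_mul, pd_eq_partialDeriv]
  ring

lemma boxM_eq_waveOperator (lam : ℝ) (f : (Fin 4 → ℝ) → ℝ) :
    BoxM lam f = waveOperator (1 - lam) f := by
  funext x
  simp only [BoxM, waveOperator, spatialLaplacian, Pi.sub_apply, Pi.smul_apply, Finset.sum_apply,
    smul_eq_mul, pd_eq_partialDeriv]
  ring

lemma waveOperator_sub (hf : ContDiff ℝ 2 f) (hg : ContDiff ℝ 2 g) :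
    waveOperator a (f - g) = waveOperator a f - waveOperator a g := by
  have second (i) : ∂[i] (∂[i] (f - g)) = ∂[i] (∂[i] f) - ∂[i] (∂[i] g) := by
    rw [partialDeriv_sub (hf.differentiable two_ne_zero) (hg.differentiable two_ne_zero),
      partialDeriv_sub (differentiable_partialDeriv hf i) (differentiable_partialDeriv hg i)]
  simp only [waveOperator, spatialLaplacian, second, Finset.sum_sub_distrib, smul_sub]
  abel

lemma waveOperator_const_smul (c : ℝ) (f : (Fin (d + 1) → ℝ) → ℝ) :
    waveOperator a (c • f) = c • waveOperator a f := by
  simp only [waveOperator, spatialLaplacian, partialDeriv_const_smul, smul_sub, Finset.smul_sum,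
    smul_comm a c]

lemma waveOperator_sum {κ : Type*} [Fintype κ] {F : κ → (Fin (d + 1) → ℝ) → ℝ}
    (hF : ∀ k, ContDiff ℝ 2 (F k)) : waveOperator a (∑ k, F k) = ∑ k, waveOperator a (F k) := by
  have second (i) : ∂[i] (∂[i] (∑ k, F k)) = ∑ k, ∂[i] (∂[i] (F k)) := by
    rw [partialDeriv_sum fun k => (hF k).differentiable two_ne_zero,
      partialDeriv_sum fun k => differentiable_partialDeriv (hF k) i]
  simp only [waveOperator, spatialLaplacian, second, Finset.sum_sub_distrib, Finset.smul_sum]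
  rw [Finset.sum_comm]

lemma waveOperator_comp_neg (a : ℝ) (f : (Fin (d + 1) → ℝ) → ℝ) :
    waveOperator a (fun x => f (-x)) = fun x => waveOperator a f (-x) := by
  have second (i) : ∂[i] (∂[i] (fun x => f (-x))) = fun x => ∂[i] (∂[i] f) (-x) := by
    have neg_eq_smul : (fun x => -∂[i] f (-x)) = (-1 : ℝ) • fun x => ∂[i] f (-x) := by
      ext
      simp
    rw [partialDeriv_comp_neg, neg_eq_smul, partialDeriv_const_smul, partialDeriv_comp_neg]
    ext
    simp
  funext x
  simp [waveOperator, spatialLaplacian, second]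

lemma waveOperator_partialDeriv (hf : ContDiff ℝ 3 f) (j : Fin (d + 1)) :
    waveOperator a (∂[j] f) = ∂[j] (waveOperator a f) := by
  have hpf (i) : ContDiff ℝ 2 (∂[i] f) := contDiff_partialDeriv hf (by norm_num) i
  have dppf (i) : Differentiable ℝ (∂[i] (∂[i] f)) := differentiable_partialDeriv (hpf i) i
  have second (i) : ∂[i] (∂[i] (∂[j] f)) = ∂[j] (∂[i] (∂[i] f)) := by
    rw [partialDeriv_comm (hf.of_le (by norm_num)) i j, partialDeriv_comm (hpf i) i j]
  simp only [waveOperator, spatialLaplacian, second]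
  rw [partialDeriv_sub (Differentiable.sum fun i _ => dppf i.succ) ((dppf 0).const_smul a),
    partialDeriv_sum fun i : Fin d => dppf i.succ, partialDeriv_const_smul]

theorem eq_zero_of_waveOperator_eq_smul (ha : 0 < a) (hm : 0 ≤ m) (hf : ContDiff ℝ 2 f)
    (heq : waveOperator a f = m • f) (h0 : ∀ x, x 0 = 0 → f x = 0)
    (h1 : ∀ x, x 0 = 0 → ∂[0] f x = 0) : f = 0 := by
  have fderiv_eq_zero (z : Fin (d + 1) → ℝ) : fderiv ℝ f z = 0 := by
    rcases le_total 0 (z 0) with hz | hz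
    · exact fderiv_eq_zero_of_nonneg_time ha hm hf heq h0 h1 hz
    · -- The equation is invariant under the reflection `x ↦ -x`, which reverses time.
      have reflected : fderiv ℝ (fun x => f (-x)) (-z) = 0 :=
        fderiv_eq_zero_of_nonneg_time (f := fun x => f (-x)) ha hm (hf.comp contDiff_neg)
          (by rw [waveOperator_comp_neg, heq]; rfl) (fun x hx => h0 _ (by simp [hx]))
          (fun x hx => by simp [partialDeriv_comp_neg, h1 (-x) (by simp [hx])]) (by simpa using hz)
      refine fderiv_eq_zero_of_partialDeriv_eq_zero fun i => ?_
      have := congrFun (partialDeriv_comp_neg f i) (-z)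
      simpa [partialDeriv, reflected] using this
  funext z
  rw [is_const_of_fderiv_eq_zero (hf.differentiable two_ne_zero) fderiv_eq_zero z 0]
  exact h0 0 rfl

end WaveOperator

section Constraint

variable {d : ℕ} {A : Fin d → (Fin (d + 1) → ℝ) → ℝ} {φ : (Fin (d + 1) → ℝ) → ℝ} {a b m : ℝ}

lemma contDiff_spatialDivergence {k l : WithTop ℕ∞} (hA : ∀ i, ContDiff ℝ l (A i))
    (hkl : k + 1 ≤ l) : ContDiff ℝ k (spatialDivergence A) :=
  ContDiff.sum fun i _ => contDiff_partialDeriv (hA i) hkl i.succ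

lemma spatialDivergence_eq_sum (A : Fin d → (Fin (d + 1) → ℝ) → ℝ) :
    spatialDivergence A = ∑ i : Fin d, ∂[i.succ] (A i) :=
  (Finset.sum_fn _ _).symm

lemma waveOperator_spatialDivergence (hA : ∀ i, ContDiff ℝ 3 (A i)) :
    waveOperator a (spatialDivergence A) = spatialDivergence fun i => waveOperator a (A i) := by
  rw [spatialDivergence_eq_sum, spatialDivergence_eq_sum,
    waveOperator_sum fun i => contDiff_partialDeriv (hA i) (by norm_num) i.succ]
  exact Finset.sum_congr rfl fun i _ => waveOperator_partialDeriv (hA i) i.succ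

lemma spatialDivergence_smul_add_smul_gradient (hA : ∀ i, Differentiable ℝ (A i))
    (hφ : ContDiff ℝ 2 φ) (m k : ℝ) :
    spatialDivergence (fun i => m • A i + k • ∂[i.succ] φ) =
      m • spatialDivergence A + k • spatialLaplacian φ := by
  funext x
  simp [spatialDivergence, spatialLaplacian, partialDeriv_const_smul, partialDeriv_add
    ((hA _).const_smul m) ((differentiable_partialDeriv hφ _).const_smul k),
    Finset.sum_add_distrib, Finset.mul_sum]

lemma waveOperator_sub_inv_smul_spatialDivergence (ha : a ≠ 0) (hb : b ≠ 0)
    (hA : ∀ i, ContDiff ℝ 3 (A i)) (hφ : ContDiff ℝ 2 φ)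
    (heqA : ∀ i, waveOperator b (A i) = m • A i + (a - b) • ∂[i.succ] φ)
    (heqφ : waveOperator a φ = (m * b⁻¹ * a) • φ) :
    waveOperator b (φ - a⁻¹ • spatialDivergence A) = m • (φ - a⁻¹ • spatialDivergence A) := by
  have divergence_eq : waveOperator b (spatialDivergence A) =
      m • spatialDivergence A + (a - b) • spatialLaplacian φ := by
    rw [waveOperator_spatialDivergence hA, funext heqA, spatialDivergence_smul_add_smul_gradient
      (fun i => (hA i).differentiable three_ne_zero) hφ]
  have hD : ContDiff ℝ 2 (a⁻¹ • spatialDivergence A) :=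
    (contDiff_spatialDivergence hA (by norm_num)).const_smul a⁻¹
  rw [waveOperator_sub hφ hD, waveOperator_const_smul, divergence_eq]
  funext x
  have heqφ_x := congrFun heqφ x
  simp only [waveOperator, Pi.sub_apply, Pi.add_apply, Pi.smul_apply, smul_eq_mul] at heqφ_x ⊢
  field_simp at heqφ_x ⊢
  linear_combination heqφ_x

theorem constraint_propagation_general {lam μ n : ℝ} (hn : n ≠ 0) (hlam : lam < 1)
    {A : (Fin (d + 1) → ℝ) → Fin (d + 1) → ℝ} (hA : ∀ a, ContDiff ℝ 3 fun x => A x a)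
    (hφ : ContDiff ℝ 2 φ)
    (heq0 : ∀ x, waveOperator (1 - lam) (fun y => A y 0) x
      - μ ^ 2 * (n ^ 2)⁻¹ * (1 - lam) * A x 0 = 0)
    (heqi : ∀ (i : Fin d) (x), waveOperator (n ^ 2) (fun y => A y i.succ) x
      - μ ^ 2 * A x i.succ = (1 - lam - n ^ 2) * ∂[i.succ] φ x)
    (heqφ : ∀ x, waveOperator (1 - lam) φ x = μ ^ 2 * (n ^ 2)⁻¹ * (1 - lam) * φ x)
    (hinit1 : ∀ x, x 0 = 0 → φ x = ∂[0] (fun y => A y 0) x)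
    (hinit2 : ∀ x, x 0 = 0 → ∂[0] (fun y => A y 0) x
      = (1 - lam)⁻¹ * spatialDivergence (fun i y => A y i.succ) x)
    (hinit1' : ∀ x, x 0 = 0 → ∂[0] (fun y => φ y - ∂[0] (fun z => A z 0) y) x = 0)
    (hinit2' : ∀ x, x 0 = 0 → ∂[0] (fun y => ∂[0] (fun z => A z 0) y
      - (1 - lam)⁻¹ * spatialDivergence (fun i z => A z i.succ) y) x = 0)
    (x : Fin (d + 1) → ℝ) :
    ∂[0] (fun y => A y 0) x = (1 - lam)⁻¹ * spatialDivergence (fun i y => A y i.succ) x := by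
  have hlam' : 0 < 1 - lam := sub_pos.2 hlam
  have hA0 : ContDiff ℝ 2 (∂[0] fun y => A y 0) := contDiff_partialDeriv (hA 0) (by norm_num) 0
  have hD : ContDiff ℝ 2 ((1 - lam)⁻¹ • spatialDivergence fun i y => A y i.succ) :=
    (contDiff_spatialDivergence (fun i => hA i.succ) (by norm_num)).const_smul (1 - lam)⁻¹
  have heq0' : waveOperator (1 - lam) (fun y => A y 0) =
      (μ ^ 2 * (n ^ 2)⁻¹ * (1 - lam)) • fun y => A y 0 := funext fun x => sub_eq_zero.1 (heq0 x)
  have heqi' (i : Fin d) : waveOperator (n ^ 2) (fun y => A y i.succ) =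
      μ ^ 2 • (fun y => A y i.succ) + (1 - lam - n ^ 2) • ∂[i.succ] φ :=
    funext fun x => sub_eq_iff_eq_add'.1 (heqi i x)
  have heqφ' : waveOperator (1 - lam) φ = (μ ^ 2 * (n ^ 2)⁻¹ * (1 - lam)) • φ := funext heqφ
  have φ_eq_time : φ - ∂[0] (fun y => A y 0) = 0 := by
    refine eq_zero_of_waveOperator_eq_smul (m := μ ^ 2 * (n ^ 2)⁻¹ * (1 - lam)) hlam'
      (mul_nonneg (by positivity) hlam'.le) (hφ.sub hA0) ?_
      (fun x hx => sub_eq_zero.2 (hinit1 x hx)) hinit1'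
    rw [waveOperator_sub hφ hA0, waveOperator_partialDeriv (hA 0), heq0', partialDeriv_const_smul,
      heqφ', smul_sub]
  have φ_eq_divergence : φ - (1 - lam)⁻¹ • spatialDivergence (fun i y => A y i.succ) = 0 := by
    refine eq_zero_of_waveOperator_eq_smul (sq_pos_of_ne_zero hn) (sq_nonneg μ) (hφ.sub hD)
      (waveOperator_sub_inv_smul_spatialDivergence hlam'.ne' (pow_ne_zero 2 hn)
        (fun i => hA i.succ) hφ heqi' heqφ')
      (fun x hx => sub_eq_zero.2 ((hinit1 x hx).trans (hinit2 x hx))) ?_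
    rw [sub_eq_zero.1 φ_eq_time]
    exact hinit2'
  exact congrFun ((sub_eq_zero.1 φ_eq_time).symm.trans (sub_eq_zero.1 φ_eq_divergence)) x

end Constraint

/-- propagation of the constraint `∂₀A₀ = (1-λ)⁻¹ ∂_i A^i`
(`∂_α(m^{αβ}A_β) = 0`) by the evolution system in flat spacetime. -/
theorem constraint_propagation
    (lam μ n : ℝ) (hn : 0 < n) (hlam : lam < 1) (hlam' : lam ≠ 1 - n ^ 2)
    (A : (Fin 4 → ℝ) → Fin 4 → ℝ) (φ : (Fin 4 → ℝ) → ℝ)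
    (hA : ∀ a : Fin 4, ContDiff ℝ (⊤ : ℕ∞) (fun x => A x a)) (hφ : ContDiff ℝ (⊤ : ℕ∞) φ)
    -- the evolution system
    (heq0 : ∀ x, BoxM lam (fun y => A y 0) x
      - μ ^ 2 * (n ^ 2)⁻¹ * (1 - lam) * A x 0 = 0)
    (heqi : ∀ (i : Fin 3) (x), BoxGam n (fun y => A y i.succ) x
      - μ ^ 2 * A x i.succ = (1 - lam - n ^ 2) * pd i.succ φ x)
    (heqφ : ∀ x, BoxM lam φ x = μ ^ 2 * (n ^ 2)⁻¹ * (1 - lam) * φ x)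
    -- the identities hold at t = 0, together with their first time derivatives
    (hinit1 : ∀ x : Fin 4 → ℝ, x 0 = 0 → φ x = pd 0 (fun y => A y 0) x)
    (hinit2 : ∀ x : Fin 4 → ℝ, x 0 = 0 → pd 0 (fun y => A y 0) x
      = (1 - lam)⁻¹ * ∑ i : Fin 3, pd i.succ (fun y => A y i.succ) x)
    (hinit1' : ∀ x : Fin 4 → ℝ, x 0 = 0 →
      pd 0 (fun y => φ y - pd 0 (fun z => A z 0) y) x = 0)
    (hinit2' : ∀ x : Fin 4 → ℝ, x 0 = 0 →
      pd 0 (fun y => pd 0 (fun z => A z 0) y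
        - (1 - lam)⁻¹ * ∑ i : Fin 3, pd i.succ (fun z => A z i.succ) y) x = 0)
    -- compactly supported initial data
    (hsupA : ∀ a : Fin 4, HasCompactSupport (fun y : Fin 3 → ℝ => A (Fin.cons 0 y) a))
    (hsupA' : ∀ a : Fin 4, HasCompactSupport
      (fun y : Fin 3 → ℝ => pd 0 (fun z => A z a) (Fin.cons 0 y)))
    (hsupφ : HasCompactSupport (fun y : Fin 3 → ℝ => φ (Fin.cons 0 y)))
    (hsupφ' : HasCompactSupport (fun y : Fin 3 → ℝ => pd 0 φ (Fin.cons 0 y))) :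
    ∀ x : Fin 4 → ℝ, pd 0 (fun y => A y 0) x
      = (1 - lam)⁻¹ * ∑ i : Fin 3, pd i.succ (fun y => A y i.succ) x := by
  simp only [boxM_eq_waveOperator, boxGam_eq_waveOperator] at heq0 heqi heqφ
  exact constraint_propagation_general hn.ne' hlam (fun a => contDiff_infty.1 (hA a) 3)
    (contDiff_infty.1 hφ 2) heq0 heqi heqφ hinit1 hinit2 hinit1' hinit2'
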